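/- Let K satisfy the kernel assumption and L(t) = ∫_t^∞ K(u)du·1_{t>0} − ∫_{−∞}^t K(u)du·1_{t≤0}. With b_n = m_n Δ_n → 0, m_n √Δ_n → ∞, t_j = jΔ_n, and t ∈ ((i−1)Δ_n, iΔ_n], the quantity (Δ_n²/m_n)[ Σ_{j=i+1}^n (Σ_{l=j}^n K_{b_n}(t_{l−1}−t))² + Σ_{j=2}^i (Σ_{l=1}^{j−1} K_{b_n}(t_{l−1}−t))² ] converges to ∫_ℝ L(u)² du as n → ∞, provided 0 < t < T and t/b_n → ∞, (T−t)/b_n → ∞. -/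

import Mathlib

open MeasureTheory Set Filter
open scoped Topology

/-!
In units of the bandwidth the two families of inner sums are Riemann sums of mesh `h = 1 / m` for
the tails `G u = ∫_u^∞ f`, where `f` is `K` or its reflection, so the quantity is a Riemann sum for
the integrals of `‖G‖ ^ 2` over `(0, ∞)`. The difficulty is that the errors of the inner sums must
be controlled in `ℓ²` over a growing number `N` of cells, while `K` has only a first moment. A
discrete Hardy inequality bounds this `ℓ²` norm by the errors on single cells, weighted by the
distance from the origin; and since a Lipschitz `f` satisfies `‖f a - f b‖ ^ 2 ≤ 8 C ∫_a^b ‖f‖`,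
each squared cell error costs only one power of the weight times `∫ ‖f‖`, the other power being at
most `N`. The total is `O(N h ^ 2)` times the first moment, and vanishes because `m √Δ → ∞`.
-/

section FiniteSums

variable {α ι E : Type*} [SeminormedAddCommGroup E]

theorem sum_range_eq_sum_succ_mul_sub_add (a : ℕ → ℝ) (N : ℕ) :
    ∑ p ∈ Finset.range N, a p
      = ∑ p ∈ Finset.range N, ((p : ℝ) + 1) * (a p - a (p + 1)) + N * a N := by
  induction N with
  | zero => simp
  | succ N ih => rw [Finset.sum_range_succ, Finset.sum_range_succ, ih]; push_cast; ring

/-- A discrete Hardy inequality: Abel summation, then absorption of half of the left-hand side. -/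
theorem sum_norm_sq_le_four_mul_sum_sq_mul_norm_sub (S : ℕ → E) {N : ℕ} (hN : S N = 0) :
    ∑ p ∈ Finset.range N, ‖S p‖ ^ 2
      ≤ 4 * ∑ p ∈ Finset.range N, (((p : ℝ) + 1) * ‖S p - S (p + 1)‖) ^ 2 := by
  have abel := sum_range_eq_sum_succ_mul_sub_add (fun p => ‖S p‖ ^ 2) N
  have absorb : ∑ p ∈ Finset.range N, ((p : ℝ) + 1) * (‖S p‖ ^ 2 - ‖S (p + 1)‖ ^ 2)
      ≤ ∑ p ∈ Finset.range N,
        (‖S p‖ ^ 2 / 2 + 2 * (((p : ℝ) + 1) * ‖S p - S (p + 1)‖) ^ 2) := by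
    refine Finset.sum_le_sum fun p _ => ?_
    have hsub : ‖S p‖ ^ 2 - ‖S (p + 1)‖ ^ 2 ≤ 2 * ‖S p‖ * ‖S p - S (p + 1)‖ := by
      nlinarith [norm_sub_norm_le (S p) (S (p + 1)), norm_nonneg (S p), norm_nonneg (S (p + 1)),
        norm_nonneg (S p - S (p + 1)), sq_nonneg (‖S p‖ - ‖S (p + 1)‖)]
    have hmul := mul_le_mul_of_nonneg_left hsub (by positivity : (0 : ℝ) ≤ (p : ℝ) + 1)
    linarith [sq_nonneg (‖S p‖ - 2 * (((p : ℝ) + 1) * ‖S p - S (p + 1)‖))]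
  rw [Finset.sum_add_distrib, ← Finset.mul_sum, ← Finset.sum_div] at absorb
  simp only [hN, norm_zero, ne_eq, OfNat.ofNat_ne_zero, not_false_eq_true, zero_pow, mul_zero,
    add_zero] at abel
  linarith

theorem abs_sum_norm_sq_sub_sum_norm_sq_le (s : Finset α) (x y : α → E) :
    |∑ a ∈ s, ‖x a‖ ^ 2 - ∑ a ∈ s, ‖y a‖ ^ 2|
      ≤ ∑ a ∈ s, ‖x a - y a‖ ^ 2
        + 2 * (√(∑ a ∈ s, ‖x a - y a‖ ^ 2) * √(∑ a ∈ s, ‖y a‖ ^ 2)) := by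
  have termwise : ∀ a ∈ s, |‖x a‖ ^ 2 - ‖y a‖ ^ 2|
      ≤ ‖x a - y a‖ ^ 2 + 2 * (‖x a - y a‖ * ‖y a‖) := fun a _ => by
    rw [abs_le]
    constructor <;>
      nlinarith [abs_le.1 (abs_norm_sub_norm_le (x a) (y a)), norm_nonneg (x a), norm_nonneg (y a),
        norm_nonneg (x a - y a)]
  calc |∑ a ∈ s, ‖x a‖ ^ 2 - ∑ a ∈ s, ‖y a‖ ^ 2|
      ≤ ∑ a ∈ s, |‖x a‖ ^ 2 - ‖y a‖ ^ 2| := by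
        rw [← Finset.sum_sub_distrib]; exact Finset.abs_sum_le_sum_abs _ _
    _ ≤ ∑ a ∈ s, (‖x a - y a‖ ^ 2 + 2 * (‖x a - y a‖ * ‖y a‖)) := Finset.sum_le_sum termwise
    _ = ∑ a ∈ s, ‖x a - y a‖ ^ 2 + 2 * ∑ a ∈ s, ‖x a - y a‖ * ‖y a‖ := by
        rw [Finset.sum_add_distrib, Finset.mul_sum]
    _ ≤ _ := by gcongr; exact Real.sum_mul_le_sqrt_mul_sqrt _ _ _

theorem tendsto_mul_sum_norm_sq_of_tendsto_mul_sum_norm_sub_sq {l : Filter ι} {w : ι → ℝ}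
    (hw : ∀ᶠ n in l, 0 ≤ w n) {s : ι → Finset α} {x y : ι → α → E} {J : ℝ}
    (hxy : Tendsto (fun n => w n * ∑ a ∈ s n, ‖x n a - y n a‖ ^ 2) l (𝓝 0))
    (hy : Tendsto (fun n => w n * ∑ a ∈ s n, ‖y n a‖ ^ 2) l (𝓝 J)) :
    Tendsto (fun n => w n * ∑ a ∈ s n, ‖x n a‖ ^ 2) l (𝓝 J) := by
  have hbound := hxy.add (((hxy.sqrt).mul hy.sqrt).const_mul 2)
  simp only [Real.sqrt_zero, zero_mul, mul_zero, add_zero] at hbound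
  have hdiff : Tendsto (fun n => w n * ∑ a ∈ s n, ‖x n a‖ ^ 2 - w n * ∑ a ∈ s n, ‖y n a‖ ^ 2)
      l (𝓝 0) := by
    refine squeeze_zero_norm' (hw.mono fun n hn => ?_) hbound
    rw [← mul_sub, Real.norm_eq_abs, abs_mul, abs_of_nonneg hn]
    refine (mul_le_mul_of_nonneg_left
      (abs_sum_norm_sq_sub_sum_norm_sq_le (s n) (x n) (y n)) hn).trans_eq ?_
    rw [Real.sqrt_mul hn, Real.sqrt_mul hn, mul_mul_mul_comm, Real.mul_self_sqrt hn]
    ring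
  simpa only [sub_add_cancel, zero_add] using hdiff.add hy

end FiniteSums

section Oscillation

variable {E : Type*} [SeminormedAddCommGroup E] {f : ℝ → E} {C : NNReal} {a b : ℝ}

theorem mul_norm_sub_le_integral_norm_of_lipschitzWith (hf : LipschitzWith C f) {y : ℝ}
    (hy : y ∈ Icc a b) : (b - a) * (‖f y‖ - C * (b - a)) ≤ ∫ v in a..b, ‖f v‖ := by
  have hab : a ≤ b := hy.1.trans hy.2
  have lower : ∀ v ∈ Icc a b, ‖f y‖ - C * (b - a) ≤ ‖f v‖ := fun v hv => by
    have hlip := hf.norm_sub_le y v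
    have hdist : ‖y - v‖ ≤ b - a := Real.dist_le_of_mem_Icc hy hv
    have := norm_sub_norm_le (f y) (f v)
    have := mul_le_mul_of_nonneg_left hdist C.coe_nonneg
    linarith
  have hmono := intervalIntegral.integral_mono_on (μ := volume) hab intervalIntegrable_const
    (hf.continuous.norm.intervalIntegrable a b) lower
  rwa [intervalIntegral.integral_const, smul_eq_mul] at hmono

/-- If `d = ‖f a - f b‖`, then `‖f a‖ ≥ d / 2` or `‖f b‖ ≥ d / 2`, and `f` stays of size
comparable to `d` on an interval of length `d / (4 * C)` next to that end point. -/
theorem norm_sub_sq_le_mul_integral_norm_of_lipschitzWith (hf : LipschitzWith C f) (hab : a ≤ b) :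
    ‖f a - f b‖ ^ 2 ≤ 8 * C * ∫ v in a..b, ‖f v‖ := by
  have hint : ∀ x y, IntervalIntegrable (fun v => ‖f v‖) volume x y :=
    hf.continuous.norm.intervalIntegrable
  set d := ‖f a - f b‖
  have hdC : d ≤ C * (b - a) := by
    simpa [abs_sub_comm a b, abs_of_nonneg (sub_nonneg.2 hab)] using hf.norm_sub_le a b
  rcases C.coe_nonneg.eq_or_lt with hC | hC
  · have hd : d = 0 := le_antisymm (by simpa [← hC] using hdC) (norm_nonneg _)
    simp [hd, ← hC]
  set r := d / (4 * C)
  have hr : 0 ≤ r := by positivity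
  have hCr : C * r = d / 4 := by simp only [r]; field_simp
  have hrab : 2 * r ≤ b - a := by nlinarith
  have left := mul_norm_sub_le_integral_norm_of_lipschitzWith hf
    (left_mem_Icc.2 (le_add_of_nonneg_right hr) : a ∈ Icc a (a + r))
  have right := mul_norm_sub_le_integral_norm_of_lipschitzWith hf
    (right_mem_Icc.2 (sub_le_self b hr) : b ∈ Icc (b - r) b)
  rw [add_sub_cancel_left] at left
  rw [sub_sub_cancel] at right
  have disjoint : (∫ v in a..a + r, ‖f v‖) + ∫ v in b - r..b, ‖f v‖ ≤ ∫ v in a..b, ‖f v‖ := by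
    rw [← intervalIntegral.integral_add_adjacent_intervals (hint a (a + r)) (hint (a + r) b)]
    gcongr
    exact intervalIntegral.integral_mono_interval (by linarith) (by linarith) le_rfl
      (Eventually.of_forall fun _ => norm_nonneg _) (hint _ _)
  have hrd : r * (d / 2) ≤ ∫ v in a..b, ‖f v‖ := by
    have := norm_sub_le (f a) (f b)
    nlinarith
  calc d ^ 2 = 8 * C * (r * (d / 2)) := by linear_combination -4 * d * hCr
    _ ≤ _ := by gcongr

end Oscillation

section Tail

variable {E : Type*} [NormedAddCommGroup E] [NormedSpace ℝ E]

/-- The upper tail `u ↦ ∫_u^∞ f` of a function on the line. For `u > 0` this is the function `L` of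
the kernel `f`; the values of `L` at `u ≤ 0` are, up to sign, tails of the reflected kernel. -/
noncomputable def upperTail (f : ℝ → E) (u : ℝ) : E :=
  ∫ v in Ioi u, f v

variable {f : ℝ → E}

theorem upperTail_sub_upperTail (hf : Integrable f) (a b : ℝ) :
    upperTail f a - upperTail f b = ∫ v in a..b, f v :=
  intervalIntegral.integral_Ioi_sub_Ioi' hf.integrableOn hf.integrableOn

theorem norm_upperTail_le (hf : Integrable f) (u : ℝ) : ‖upperTail f u‖ ≤ ∫ v, ‖f v‖ :=
  (norm_integral_le_integral_norm _).trans
    (setIntegral_le_integral hf.norm (Eventually.of_forall fun _ => norm_nonneg _))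

theorem mul_norm_upperTail_le (hf : Integrable f) (hfx : Integrable fun v => v • f v) {u : ℝ}
    (hu : 0 ≤ u) : u * ‖upperTail f u‖ ≤ ∫ v, ‖v • f v‖ :=
  calc u * ‖upperTail f u‖ ≤ u * ∫ v in Ioi u, ‖f v‖ := by
        gcongr; exact norm_integral_le_integral_norm _
    _ = ∫ v in Ioi u, u * ‖f v‖ := (integral_const_mul _ _).symm
    _ ≤ ∫ v in Ioi u, ‖v • f v‖ := by
        refine setIntegral_mono_on (hf.norm.integrableOn.const_mul u) hfx.norm.integrableOn
          measurableSet_Ioi fun v hv => ?_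
        rw [norm_smul]
        gcongr
        exact (mem_Ioi.1 hv).le.trans (le_abs_self v)
    _ ≤ _ := setIntegral_le_integral hfx.norm (Eventually.of_forall fun _ => norm_nonneg _)

theorem continuous_upperTail (hf : Integrable f) : Continuous (upperTail f) := by
  have h : upperTail f = fun u => upperTail f 0 - ∫ v in (0 : ℝ)..u, f v := by
    funext u
    rw [← upperTail_sub_upperTail hf, sub_sub_cancel]
  rw [h]
  exact continuous_const.sub
    (intervalIntegral.continuous_primitive (fun _ _ => hf.intervalIntegrable) 0)

theorem integrableOn_norm_sq_upperTail (hf : Integrable f) (hfx : Integrable fun v => v • f v) :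
    IntegrableOn (fun u => ‖upperTail f u‖ ^ 2) (Ioi 0) := by
  have hdom := (integrable_inv_one_add_sq.const_mul
    (((∫ v, ‖f v‖) + ∫ v, ‖v • f v‖) ^ 2)).integrableOn (s := Ioi (0 : ℝ))
  refine hdom.mono' ((continuous_upperTail hf).norm.pow 2).aestronglyMeasurable ?_
  refine (ae_restrict_iff' measurableSet_Ioi).2 (Eventually.of_forall fun u hu => ?_)
  have hu : 0 < u := hu
  rw [Real.norm_of_nonneg (by positivity), ← div_eq_mul_inv, le_div_iff₀ (by positivity)]
  calc ‖upperTail f u‖ ^ 2 * (1 + u ^ 2) ≤ (‖upperTail f u‖ + u * ‖upperTail f u‖) ^ 2 := by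
        nlinarith [mul_nonneg hu.le (sq_nonneg ‖upperTail f u‖)]
    _ ≤ _ := by
        gcongr
        exacts [norm_upperTail_le hf u, mul_norm_upperTail_le hf hfx hu.le]

theorem abs_norm_sq_upperTail_sub_le (hf : Integrable f) {a b : ℝ} (hab : a ≤ b) :
    |‖upperTail f a‖ ^ 2 - ‖upperTail f b‖ ^ 2|
      ≤ ∫ v in a..b, 2 * (∫ w, ‖f w‖) * ‖f v‖ := by
  have hsub : |‖upperTail f a‖ - ‖upperTail f b‖| ≤ ∫ v in a..b, ‖f v‖ := by
    refine (abs_norm_sub_norm_le _ _).trans ?_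
    rw [upperTail_sub_upperTail hf]
    exact intervalIntegral.norm_integral_le_integral_norm hab
  have hadd : |‖upperTail f a‖ + ‖upperTail f b‖| ≤ 2 * ∫ w, ‖f w‖ := by
    rw [abs_of_nonneg (by positivity), two_mul]
    exact add_le_add (norm_upperTail_le hf a) (norm_upperTail_le hf b)
  rw [sq_sub_sq, abs_mul, intervalIntegral.integral_const_mul]
  gcongr

end Tail

section Grid

/-- The `q`-th point `c + q h` of the grid of mesh `h` starting at `c`. -/
def gridPoint (c h : ℝ) (q : ℕ) : ℝ :=
  c + q * h

theorem gridPoint_zero (c h : ℝ) : gridPoint c h 0 = c := by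
  simp [gridPoint]

theorem gridPoint_succ (c h : ℝ) (q : ℕ) : gridPoint c h (q + 1) = gridPoint c h q + h := by
  simp only [gridPoint]
  push_cast
  ring

theorem le_gridPoint {c h : ℝ} (hh : 0 ≤ h) (q : ℕ) : c ≤ gridPoint c h q :=
  le_add_of_nonneg_right (by positivity)

theorem gridPoint_le_gridPoint_succ {c h : ℝ} (hh : 0 ≤ h) (q : ℕ) :
    gridPoint c h q ≤ gridPoint c h (q + 1) := by
  rw [gridPoint_succ]
  exact le_add_of_nonneg_right hh

theorem sum_integral_gridPoint_le_integral {φ : ℝ → ℝ} (hφ : Integrable φ) (hφ0 : ∀ v, 0 ≤ φ v)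
    (c : ℝ) {h : ℝ} (hh : 0 ≤ h) (N : ℕ) :
    ∑ q ∈ Finset.range N, ∫ v in gridPoint c h q..gridPoint c h (q + 1), φ v ≤ ∫ v, φ v := by
  rw [intervalIntegral.sum_integral_adjacent_intervals fun _ _ => hφ.intervalIntegrable,
    gridPoint_zero, intervalIntegral.integral_of_le (le_gridPoint hh N)]
  exact setIntegral_le_integral hφ (Eventually.of_forall hφ0)

end Grid

section RiemannSum

variable {E : Type*} [NormedAddCommGroup E] [NormedSpace ℝ E] [CompleteSpace E] {f : ℝ → E}

theorem norm_smul_sub_integral_le_mul {a b B : ℝ} (hab : a ≤ b)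
    (hf : IntervalIntegrable f volume a b) (hB : ∀ v ∈ Ioc a b, ‖f a - f v‖ ≤ B) :
    ‖(b - a) • f a - ∫ v in a..b, f v‖ ≤ B * (b - a) := by
  rw [← intervalIntegral.integral_const,
    ← intervalIntegral.integral_sub intervalIntegrable_const hf, ← abs_of_nonneg (sub_nonneg.2 hab)]
  exact intervalIntegral.norm_integral_le_of_norm_le_const fun v hv =>
    hB v (uIoc_of_le hab ▸ hv)

theorem norm_smul_sum_sub_integral_le {φ : ℝ → ℝ}
    (hf : ∀ a b, IntervalIntegrable f volume a b) (hφ : Integrable φ) (hφ0 : ∀ v, 0 ≤ φ v)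
    (hfφ : ∀ a b, a ≤ b → ‖f a - f b‖ ≤ ∫ v in a..b, φ v) (c : ℝ) {h : ℝ} (hh : 0 ≤ h) (N : ℕ) :
    ‖h • ∑ q ∈ Finset.range N, f (gridPoint c h q) - ∫ v in c..gridPoint c h N, f v‖
      ≤ h * ∫ v, φ v := by
  have cell : ∀ q, ‖h • f (gridPoint c h q)
      - ∫ v in gridPoint c h q..gridPoint c h (q + 1), f v‖
      ≤ h * ∫ v in gridPoint c h q..gridPoint c h (q + 1), φ v := fun q => by
    have hle := gridPoint_le_gridPoint_succ (c := c) hh q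
    have := norm_smul_sub_integral_le_mul hle (hf _ _) fun v hv =>
      (hfφ _ v hv.1.le).trans (intervalIntegral.integral_mono_interval le_rfl hv.1.le hv.2
        (Eventually.of_forall hφ0) hφ.intervalIntegrable)
    rwa [gridPoint_succ, add_sub_cancel_left, ← gridPoint_succ, mul_comm] at this
  have split := intervalIntegral.sum_integral_adjacent_intervals (n := N)
    (a := gridPoint c h) fun _ _ => hf _ _
  rw [gridPoint_zero] at split
  rw [← split, Finset.smul_sum, ← Finset.sum_sub_distrib]
  calc _ ≤ ∑ q ∈ Finset.range N, h * ∫ v in gridPoint c h q..gridPoint c h (q + 1), φ v :=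
        norm_sum_le_of_le _ fun q _ => cell q
    _ ≤ _ := by
        rw [← Finset.mul_sum]
        gcongr
        exact sum_integral_gridPoint_le_integral hφ hφ0 c hh N

theorem norm_smul_sub_integral_sq_le_of_lipschitzWith {C : NNReal} (hf : LipschitzWith C f)
    {a b : ℝ} (hab : a ≤ b) :
    ‖(b - a) • f a - ∫ v in a..b, f v‖ ^ 2 ≤ 8 * C * (b - a) ^ 2 * ∫ v in a..b, ‖f v‖ := by
  have oscillation : ∀ v ∈ Ioc a b, ‖f a - f v‖ ≤ √(8 * C * ∫ w in a..b, ‖f w‖) := fun v hv => by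
    refine Real.le_sqrt_of_sq_le
      ((norm_sub_sq_le_mul_integral_norm_of_lipschitzWith hf hv.1.le).trans ?_)
    gcongr
    exact intervalIntegral.integral_mono_interval le_rfl hv.1.le hv.2
      (Eventually.of_forall fun _ => norm_nonneg _) (hf.continuous.norm.intervalIntegrable _ _)
  have hint : 0 ≤ ∫ w in a..b, ‖f w‖ :=
    intervalIntegral.integral_nonneg hab fun _ _ => norm_nonneg _
  calc _ ≤ (√(8 * C * ∫ w in a..b, ‖f w‖) * (b - a)) ^ 2 := by
        gcongr
        exact norm_smul_sub_integral_le_mul hab (hf.continuous.intervalIntegrable a b) oscillation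
    _ = _ := by rw [mul_pow, Real.sq_sqrt (by positivity)]; ring

end RiemannSum

section TailRiemannSum

variable {E : Type*} [NormedAddCommGroup E] [NormedSpace ℝ E]

/-- The Riemann sum `h ∑_{p ≤ q < N} f (c + q h)`. It approximates `∫ f` from the `p`-th to the
`N`-th grid point, hence the upper tail of `f` at the `p`-th one if the grid reaches far enough. -/
noncomputable def tailRiemannSum (f : ℝ → E) (c h : ℝ) (N p : ℕ) : E :=
  h • ∑ q ∈ Finset.Ico p N, f (gridPoint c h q)

/-- The difference between a tail Riemann sum and the integral it approximates. -/
noncomputable def tailRiemannError (f : ℝ → E) (c h : ℝ) (N p : ℕ) : E :=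
  tailRiemannSum f c h N p
    - (upperTail f (gridPoint c h p) - upperTail f (gridPoint c h N))

variable {f : ℝ → E}

theorem tailRiemannError_self (c h : ℝ) (N : ℕ) : tailRiemannError f c h N N = 0 := by
  simp [tailRiemannError, tailRiemannSum]

theorem tailRiemannError_sub_succ (hf : Integrable f) (c h : ℝ) {N p : ℕ} (hp : p < N) :
    tailRiemannError f c h N p - tailRiemannError f c h N (p + 1)
      = h • f (gridPoint c h p) - ∫ v in gridPoint c h p..gridPoint c h (p + 1), f v := by
  rw [← upperTail_sub_upperTail hf]
  simp only [tailRiemannError, tailRiemannSum, Finset.sum_eq_sum_Ico_succ_bot hp, smul_add]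
  abel

theorem mul_integral_norm_le_integral_norm_smul_add (hf : Integrable f)
    (hfx : Integrable fun v => v • f v) {c h : ℝ} (hc : 0 ≤ c) (hh : 0 ≤ h) (q : ℕ) :
    ((q : ℝ) + 1) * h * ∫ v in gridPoint c h q..gridPoint c h (q + 1), ‖f v‖
      ≤ ∫ v in gridPoint c h q..gridPoint c h (q + 1), (‖v • f v‖ + h * ‖f v‖) := by
  rw [← intervalIntegral.integral_const_mul]
  refine intervalIntegral.integral_mono_on (gridPoint_le_gridPoint_succ hh q)
    (hf.norm.const_mul _).intervalIntegrable
    (hfx.norm.add (hf.norm.const_mul h)).intervalIntegrable fun v hv => ?_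
  have hqv : (q : ℝ) * h ≤ |v| :=
    ((le_add_of_nonneg_left hc).trans hv.1).trans (le_abs_self v)
  rw [norm_smul, Real.norm_eq_abs, ← add_mul, add_one_mul]
  gcongr

theorem sq_mul_norm_tailRiemannError_sub_succ_le [CompleteSpace E] {C : NNReal}
    (hlip : LipschitzWith C f) (hf : Integrable f) (hfx : Integrable fun v => v • f v) {c h : ℝ}
    (hc : 0 ≤ c) (hh : 0 ≤ h) {N q : ℕ} (hq : q < N) :
    (((q : ℝ) + 1) * ‖tailRiemannError f c h N q - tailRiemannError f c h N (q + 1)‖) ^ 2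
      ≤ 8 * C * (N * h) *
        ∫ v in gridPoint c h q..gridPoint c h (q + 1), (‖v • f v‖ + h * ‖f v‖) := by
  have hle := gridPoint_le_gridPoint_succ (c := c) hh q
  have local_error := norm_smul_sub_integral_sq_le_of_lipschitzWith hlip hle
  have hmesh : gridPoint c h (q + 1) - gridPoint c h q = h := by
    rw [gridPoint_succ, add_sub_cancel_left]
  rw [hmesh] at local_error
  rw [tailRiemannError_sub_succ hf c h hq, mul_pow]
  set a := gridPoint c h q
  set b := gridPoint c h (q + 1)
  have hint : 0 ≤ ∫ v in a..b, ‖f v‖ :=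
    intervalIntegral.integral_nonneg hle fun _ _ => norm_nonneg _
  have hqN : (q : ℝ) + 1 ≤ N := by exact_mod_cast hq
  calc ((q : ℝ) + 1) ^ 2 * ‖h • f a - ∫ v in a..b, f v‖ ^ 2
      ≤ ((q : ℝ) + 1) ^ 2 * (8 * C * h ^ 2 * ∫ v in a..b, ‖f v‖) := by gcongr
    _ = 8 * C * ((((q : ℝ) + 1) * h) * (((q : ℝ) + 1) * h * ∫ v in a..b, ‖f v‖)) := by ring
    _ ≤ 8 * C * ((N * h) * ∫ v in a..b, (‖v • f v‖ + h * ‖f v‖)) := by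
        gcongr
        exact mul_integral_norm_le_integral_norm_smul_add hf hfx hc hh q
    _ = _ := by ring

theorem sum_norm_sq_tailRiemannError_le [CompleteSpace E] {C : NNReal} (hlip : LipschitzWith C f)
    (hf : Integrable f) (hfx : Integrable fun v => v • f v) {c h : ℝ} (hc : 0 ≤ c) (hh : 0 ≤ h)
    (N : ℕ) :
    ∑ p ∈ Finset.range N, ‖tailRiemannError f c h N p‖ ^ 2
      ≤ 32 * C * (N * h) * ((∫ v, ‖v • f v‖) + h * ∫ v, ‖f v‖) := by
  have hφ : Integrable fun v => ‖v • f v‖ + h * ‖f v‖ := hfx.norm.add (hf.norm.const_mul h)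
  calc ∑ p ∈ Finset.range N, ‖tailRiemannError f c h N p‖ ^ 2
      ≤ 4 * ∑ p ∈ Finset.range N, (((p : ℝ) + 1) *
          ‖tailRiemannError f c h N p - tailRiemannError f c h N (p + 1)‖) ^ 2 :=
        sum_norm_sq_le_four_mul_sum_sq_mul_norm_sub _ (tailRiemannError_self c h N)
    _ ≤ 4 * ∑ p ∈ Finset.range N, 8 * C * (N * h) *
          ∫ v in gridPoint c h p..gridPoint c h (p + 1), (‖v • f v‖ + h * ‖f v‖) := by
        gcongr with p hp
        exact sq_mul_norm_tailRiemannError_sub_succ_le hlip hf hfx hc hh (Finset.mem_range.1 hp)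
    _ ≤ 4 * (8 * C * (N * h) * ∫ v, (‖v • f v‖ + h * ‖f v‖)) := by
        rw [← Finset.mul_sum]
        gcongr
        exact sum_integral_gridPoint_le_integral hφ (fun v => by positivity) c hh N
    _ = _ := by
        rw [integral_add hfx.norm (hf.norm.const_mul h), integral_const_mul]
        ring

end TailRiemannSum

section Limit

variable {ι E : Type*} {l : Filter ι} [NormedAddCommGroup E] [NormedSpace ℝ E] {f : ℝ → E}
  {c h : ι → ℝ} {N : ι → ℕ}

theorem tendsto_gridPoint_atTop (hc : Tendsto c l (𝓝[≥] 0))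
    (hN : Tendsto (fun n => (N n : ℝ) * h n) l atTop) :
    Tendsto (fun n => gridPoint (c n) (h n) (N n)) l atTop :=
  (hc.mono_right nhdsWithin_le_nhds).add_atTop hN

theorem tendsto_intervalIntegral_norm_sq_upperTail [l.IsCountablyGenerated] (hf : Integrable f)
    (hfx : Integrable fun v => v • f v) {a b : ι → ℝ} (ha : Tendsto a l (𝓝 0))
    (hb : Tendsto b l atTop) :
    Tendsto (fun n => ∫ u in a n..b n, ‖upperTail f u‖ ^ 2) l
      (𝓝 (∫ u in Ioi 0, ‖upperTail f u‖ ^ 2)) := by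
  have hcont : Continuous fun u => ‖upperTail f u‖ ^ 2 := (continuous_upperTail hf).norm.pow 2
  have hint : ∀ x y, IntervalIntegrable (fun u => ‖upperTail f u‖ ^ 2) volume x y :=
    hcont.intervalIntegrable
  have main := intervalIntegral_tendsto_integral_Ioi 0 (integrableOn_norm_sq_upperTail hf hfx) hb
  have start : Tendsto (fun n => ∫ u in (0 : ℝ)..a n, ‖upperTail f u‖ ^ 2) l (𝓝 0) := by
    simpa only [intervalIntegral.integral_same, Function.comp_def] using
      ((intervalIntegral.continuous_primitive hint 0).tendsto 0).comp ha
  simpa only [sub_zero, intervalIntegral.integral_interval_sub_left (hint _ _) (hint _ _)] using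
    main.sub start

theorem tendsto_mul_sum_norm_sq_upperTail [l.IsCountablyGenerated] (hf : Integrable f)
    (hfx : Integrable fun v => v • f v) (hh : Tendsto h l (𝓝[>] 0)) (hc : Tendsto c l (𝓝[≥] 0))
    (hN : Tendsto (fun n => (N n : ℝ) * h n) l atTop) :
    Tendsto (fun n => h n * ∑ p ∈ Finset.range (N n),
        ‖upperTail f (gridPoint (c n) (h n) p)‖ ^ 2) l
      (𝓝 (∫ u in Ioi 0, ‖upperTail f u‖ ^ 2)) := by
  rw [tendsto_nhdsWithin_iff] at hh
  have hint := tendsto_intervalIntegral_norm_sq_upperTail hf hfx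
    (hc.mono_right nhdsWithin_le_nhds) (tendsto_gridPoint_atTop hc hN)
  have herr : Tendsto (fun n => h n * ∑ p ∈ Finset.range (N n),
      ‖upperTail f (gridPoint (c n) (h n) p)‖ ^ 2
      - ∫ u in c n..gridPoint (c n) (h n) (N n), ‖upperTail f u‖ ^ 2) l (𝓝 0) := by
    refine squeeze_zero_norm' (hh.2.mono fun n hn => ?_)
      (by simpa using hh.1.mul_const (∫ v, 2 * (∫ w, ‖f w‖) * ‖f v‖))
    exact norm_smul_sum_sub_integral_le
      (((continuous_upperTail hf).norm.pow 2).intervalIntegrable)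
      (hf.norm.const_mul _) (fun v => by positivity)
      (fun a b hab => abs_norm_sq_upperTail_sub_le hf hab) (c n) (le_of_lt hn) (N n)
  simpa only [sub_add_cancel, zero_add] using herr.add hint

theorem tendsto_mul_sum_norm_sq_tailRiemannError [CompleteSpace E] {C : NNReal}
    (hlip : LipschitzWith C f) (hf : Integrable f) (hfx : Integrable fun v => v • f v)
    (hh : Tendsto h l (𝓝[>] 0)) (hc : ∀ᶠ n in l, 0 ≤ c n)
    (hN2 : Tendsto (fun n => (N n : ℝ) * h n ^ 2) l (𝓝 0)) :
    Tendsto (fun n => h n * ∑ p ∈ Finset.range (N n),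
      ‖tailRiemannError f (c n) (h n) (N n) p‖ ^ 2) l (𝓝 0) := by
  rw [tendsto_nhdsWithin_iff] at hh
  have hbound : Tendsto (fun n => 32 * C * (N n * h n ^ 2)
      * ((∫ v, ‖v • f v‖) + h n * ∫ v, ‖f v‖)) l (𝓝 0) := by
    simpa using (hN2.const_mul (32 * (C : ℝ))).mul ((hh.1.mul_const (∫ v, ‖f v‖)).const_add
      (∫ v, ‖v • f v‖))
  refine squeeze_zero' (hh.2.mono fun n hn => ?_) ?_ hbound
  · have := mem_Ioi.1 hn
    positivity
  filter_upwards [hh.2, hc] with n hn hcn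
  have hn := (mem_Ioi.1 hn).le
  refine (mul_le_mul_of_nonneg_left
    (sum_norm_sq_tailRiemannError_le hlip hf hfx hcn hn (N n)) hn).trans_eq ?_
  ring

theorem tendsto_mul_sum_norm_sq_upperTail_gridPoint_last (hf : Integrable f)
    (hfx : Integrable fun v => v • f v) (hc : ∀ᶠ n in l, 0 ≤ c n)
    (hN : Tendsto (fun n => (N n : ℝ) * h n) l atTop) :
    Tendsto (fun n => h n * ∑ _p ∈ Finset.range (N n),
      ‖upperTail f (gridPoint (c n) (h n) (N n))‖ ^ 2) l (𝓝 0) := by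
  refine squeeze_zero' ?_ ?_ (hN.const_div_atTop ((∫ v, ‖v • f v‖) ^ 2))
  · filter_upwards [hN.eventually_gt_atTop 0] with n hNn
    exact mul_nonneg (pos_of_mul_pos_right hNn (Nat.cast_nonneg _)).le (by positivity)
  filter_upwards [hN.eventually_gt_atTop 0, hc] with n hNn hcn
  have hend : (N n : ℝ) * h n ≤ gridPoint (c n) (h n) (N n) := le_add_of_nonneg_left hcn
  set u := gridPoint (c n) (h n) (N n)
  have hu : 0 ≤ u := hNn.le.trans hend
  rw [le_div_iff₀ hNn, Finset.sum_const, Finset.card_range, nsmul_eq_mul]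
  calc h n * (N n * ‖upperTail f u‖ ^ 2) * (N n * h n)
      = (N n * h n * ‖upperTail f u‖) ^ 2 := by ring
    _ ≤ (u * ‖upperTail f u‖) ^ 2 := by gcongr
    _ ≤ _ := by
        gcongr
        exact mul_norm_upperTail_le hf hfx hu

theorem tendsto_mul_sum_norm_sq_tailRiemannSum [l.IsCountablyGenerated] [CompleteSpace E]
    {C : NNReal} (hlip : LipschitzWith C f) (hf : Integrable f)
    (hfx : Integrable fun v => v • f v) (hh : Tendsto h l (𝓝[>] 0)) (hc : Tendsto c l (𝓝[≥] 0))
    (hN : Tendsto (fun n => (N n : ℝ) * h n) l atTop)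
    (hN2 : Tendsto (fun n => (N n : ℝ) * h n ^ 2) l (𝓝 0)) :
    Tendsto (fun n => h n * ∑ p ∈ Finset.range (N n),
        ‖tailRiemannSum f (c n) (h n) (N n) p‖ ^ 2) l
      (𝓝 (∫ u in Ioi 0, ‖upperTail f u‖ ^ 2)) := by
  have hc0 : ∀ᶠ n in l, 0 ≤ c n := (tendsto_nhdsWithin_iff.1 hc).2
  have hnonneg : ∀ᶠ n in l, 0 ≤ h n :=
    (tendsto_nhdsWithin_iff.1 hh).2.mono fun _ hn => (mem_Ioi.1 hn).le
  have truncated : Tendsto (fun n => h n * ∑ p ∈ Finset.range (N n),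
      ‖upperTail f (gridPoint (c n) (h n) p) - upperTail f (gridPoint (c n) (h n) (N n))‖ ^ 2) l
      (𝓝 (∫ u in Ioi 0, ‖upperTail f u‖ ^ 2)) :=
    tendsto_mul_sum_norm_sq_of_tendsto_mul_sum_norm_sub_sq hnonneg
      (by simpa only [sub_sub_cancel_left, norm_neg] using
        tendsto_mul_sum_norm_sq_upperTail_gridPoint_last hf hfx hc0 hN)
      (tendsto_mul_sum_norm_sq_upperTail hf hfx hh hc hN)
  exact tendsto_mul_sum_norm_sq_of_tendsto_mul_sum_norm_sub_sq hnonneg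
    (tendsto_mul_sum_norm_sq_tailRiemannError hlip hf hfx hh hc0 hN2) truncated

end Limit

section Reindexing

variable {M R : Type*} [AddCommMonoid M] [AddCommMonoid R]

theorem sum_Icc_comp_sum_Icc_upper (φ : M → R) (f : ℕ → M) (i n : ℕ) :
    ∑ j ∈ Finset.Icc (i + 1) n, φ (∑ l ∈ Finset.Icc j n, f l)
      = ∑ p ∈ Finset.range (n - i), φ (∑ q ∈ Finset.Ico p (n - i), f (q + (i + 1))) := by
  rw [← Finset.Ico_add_one_right_eq_Icc, Finset.sum_Ico_eq_sum_range, Nat.add_sub_add_right]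
  refine Finset.sum_congr rfl fun p hp => ?_
  have hend : n - i + (i + 1) = n + 1 := by have := Finset.mem_range.1 hp; omega
  rw [Finset.sum_Ico_add', hend, Finset.Ico_add_one_right_eq_Icc, add_comm p]

theorem sum_Icc_comp_sum_Icc_lower (φ : M → R) (f : ℕ → M) (i : ℕ) :
    ∑ j ∈ Finset.Icc 2 i, φ (∑ l ∈ Finset.Icc 1 (j - 1), f l)
      = ∑ p ∈ Finset.range (i - 1), φ (∑ q ∈ Finset.Ico p (i - 1), f (i - 1 - q)) := by
  rw [← Finset.Ico_add_one_right_eq_Icc, Finset.sum_Ico_eq_sum_range, Nat.add_sub_add_right i 1 1,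
    ← Finset.sum_range_reflect]
  refine Finset.sum_congr rfl fun p hp => congrArg φ ?_
  have hp := Finset.mem_range.1 hp
  rw [Finset.sum_Ico_reflect _ _ (Nat.le_succ _), Nat.add_sub_cancel_left,
    ← Finset.Ico_add_one_right_eq_Icc]
  congr 2
  omega

end Reindexing

section Rates

variable {ι : Type*} {l : Filter ι} {m : ι → ℝ}

theorem tendsto_div_nhdsGE_zero {r : ι → ℝ} {B : ℝ} (hm : Tendsto m l atTop)
    (hr : ∀ᶠ n in l, r n ∈ Icc 0 B) : Tendsto (fun n => r n / m n) l (𝓝[≥] 0) := by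
  have hnonneg : ∀ᶠ n in l, 0 ≤ r n / m n := by
    filter_upwards [hr, hm.eventually_ge_atTop 0] with n hrn hmn using div_nonneg hrn.1 hmn
  refine tendsto_nhdsWithin_iff.2 ⟨?_, hnonneg⟩
  refine squeeze_zero' hnonneg ?_ (hm.const_div_atTop B)
  filter_upwards [hr, hm.eventually_ge_atTop 0] with n hrn hmn
  gcongr
  exact hrn.2

theorem tendsto_mul_inv_atTop_of_sub_one_le {x y : ι → ℝ} (hm : Tendsto m l atTop)
    (hx : Tendsto (fun n => x n / m n) l atTop) (hxy : ∀ᶠ n in l, x n - 1 ≤ y n) :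
    Tendsto (fun n => y n * (m n)⁻¹) l atTop := by
  have hshift : Tendsto (fun n => x n / m n + -(1 / m n)) l atTop :=
    hx.atTop_add (hm.const_div_atTop 1).neg
  refine tendsto_atTop_mono' l ?_ hshift
  filter_upwards [hxy, hm.eventually_ge_atTop 0] with n hn hmn
  rw [← sub_eq_add_neg, ← sub_div, div_eq_mul_inv]
  gcongr

theorem tendsto_natCast_mul_inv_sq_of_le {k N : ι → ℕ} (hkN : ∀ n, k n ≤ N n)
    (hN : Tendsto (fun n => (N n : ℝ) / m n ^ 2) l (𝓝 0)) :
    Tendsto (fun n => (k n : ℝ) * (m n)⁻¹ ^ 2) l (𝓝 0) := by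
  refine squeeze_zero (fun n => by positivity) (fun n => ?_) hN
  rw [inv_pow, ← div_eq_mul_inv]
  gcongr
  exact hkN n

end Rates

section SampleSize

variable {T : ℝ} {m : ℕ → ℝ}

theorem tendsto_atTop_of_tendsto_mul_sqrt_div
    (hm : Tendsto (fun n : ℕ => m n * √(T / n)) atTop atTop) : Tendsto m atTop atTop := by
  refine tendsto_atTop_mono' _ ?_ hm
  filter_upwards [hm.eventually_gt_atTop 0,
    (tendsto_const_div_atTop_nhds_zero_nat T).eventually_le_const one_pos] with n hpos hle
  exact mul_le_of_le_one_right (pos_of_mul_pos_left hpos (Real.sqrt_nonneg _)).le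
    (Real.sqrt_le_one.2 hle)

theorem tendsto_natCast_div_sq_of_tendsto_mul_sqrt_div (hT : 0 < T)
    (hm : Tendsto (fun n : ℕ => m n * √(T / n)) atTop atTop) :
    Tendsto (fun n : ℕ => (n : ℝ) / m n ^ 2) atTop (𝓝 0) := by
  refine (((tendsto_pow_atTop two_ne_zero).comp hm).const_div_atTop T).congr fun n => ?_
  rw [Function.comp_apply, mul_pow, Real.sq_sqrt (by positivity), mul_comm, ← div_div,
    div_div_cancel₀ hT.ne']

theorem tendsto_const_mul_natCast_div_div_atTop {x : ℝ} (hx : 0 < x) (hT : 0 < T)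
    (hm : Tendsto m atTop atTop) (hmΔ : Tendsto (fun n : ℕ => m n * (T / n)) atTop (𝓝 0)) :
    Tendsto (fun n : ℕ => x * n / T / m n) atTop atTop := by
  have hpos : ∀ᶠ n : ℕ in atTop, 0 < m n * (T / n) := by
    filter_upwards [hm.eventually_gt_atTop 0, eventually_gt_atTop 0] with n hmn hn
    have : (0 : ℝ) < n := Nat.cast_pos.2 hn
    positivity
  refine ((tendsto_inv_nhdsGT_zero.comp
    (tendsto_nhdsWithin_iff.2 ⟨hmΔ, hpos⟩)).const_mul_atTop hx).congr fun n => ?_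
  rw [Function.comp_apply, mul_inv, inv_div]
  ring

end SampleSize

section Kernel

variable {E : Type*} [NormedAddCommGroup E] [NormedSpace ℝ E] {K : ℝ → E}

/-- The kernel with bandwidth `b`, `K_b(x) = K(x / b) / b`, for a kernel with values in a normed
space. -/
noncomputable def rescaledKernel (K : ℝ → E) (b x : ℝ) : E :=
  b⁻¹ • K (x / b)

theorem sq_div_mul_norm_sum_rescaledKernel_sq (K : ℝ → E) {δ : ℝ} (hδ : δ ≠ 0) (m t : ℝ)
    (s : Finset ℕ) :
    δ ^ 2 / m * ‖∑ l ∈ s, rescaledKernel K (m * δ) (((l : ℝ) - 1) * δ - t)‖ ^ 2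
      = m⁻¹ * ‖m⁻¹ • ∑ l ∈ s, K (((l : ℝ) - 1 - t / δ) / m)‖ ^ 2 := by
  have hpoint : ∀ x : ℝ, (x * δ - t) / (m * δ) = (x - t / δ) / m := fun x => by
    rw [mul_comm m, ← div_div, sub_div, mul_div_cancel_right₀ x hδ]
  simp only [rescaledKernel, hpoint, ← Finset.smul_sum, norm_smul, mul_pow, norm_inv, norm_mul,
    mul_inv, inv_pow, Real.norm_eq_abs, sq_abs]
  field_simp

theorem sum_Icc_norm_smul_sum_sq_upper (K : ℝ → E) (m τ : ℝ) (i n : ℕ) :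
    ∑ j ∈ Finset.Icc (i + 1) n, ‖m⁻¹ • ∑ l ∈ Finset.Icc j n, K (((l : ℝ) - 1 - τ) / m)‖ ^ 2
      = ∑ p ∈ Finset.range (n - i), ‖tailRiemannSum K ((i - τ) / m) m⁻¹ (n - i) p‖ ^ 2 := by
  rw [sum_Icc_comp_sum_Icc_upper (fun x : E => ‖m⁻¹ • x‖ ^ 2)]
  refine Finset.sum_congr rfl fun p _ => ?_
  simp only [tailRiemannSum, gridPoint]
  congr! 5 with q
  push_cast
  ring

theorem sum_Icc_norm_smul_sum_sq_lower (K : ℝ → E) (m τ : ℝ) (i : ℕ) :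
    ∑ j ∈ Finset.Icc 2 i, ‖m⁻¹ • ∑ l ∈ Finset.Icc 1 (j - 1), K (((l : ℝ) - 1 - τ) / m)‖ ^ 2
      = ∑ p ∈ Finset.range (i - 1),
          ‖tailRiemannSum (fun x => K (-x)) ((τ - i + 2) / m) m⁻¹ (i - 1) p‖ ^ 2 := by
  rw [sum_Icc_comp_sum_Icc_lower (fun x : E => ‖m⁻¹ • x‖ ^ 2)]
  refine Finset.sum_congr rfl fun p _ => ?_
  simp only [tailRiemannSum, gridPoint]
  refine congrArg (fun x : E => ‖m⁻¹ • x‖ ^ 2)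
    (Finset.sum_congr rfl fun q hq => congrArg K ?_)
  have hq := (Finset.mem_Ico.1 hq).2
  rw [Nat.cast_sub hq.le, Nat.cast_sub (by omega : 1 ≤ i)]
  push_cast
  ring

theorem integral_norm_sq_eq_integral_upperTail_add {L : ℝ → E} (hK : Integrable K)
    (hKx : Integrable fun x => x • K x)
    (hL : ∀ s, L s = if 0 < s then ∫ u in Ioi s, K u else -∫ u in Iic s, K u) :
    ∫ u, ‖L u‖ ^ 2 = (∫ u in Ioi 0, ‖upperTail K u‖ ^ 2)
      + ∫ u in Ioi 0, ‖upperTail (fun x => K (-x)) u‖ ^ 2 := by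
  have hright : EqOn (fun u => ‖upperTail K u‖ ^ 2) (fun u => ‖L u‖ ^ 2) (Ioi 0) := fun u hu => by
    simp only [upperTail, hL u, if_pos (mem_Ioi.1 hu)]
  have hleft : EqOn (fun u => ‖upperTail (fun x => K (-x)) (-u)‖ ^ 2) (fun u => ‖L u‖ ^ 2)
      (Iic 0) := fun u hu => by
    simp only [upperTail, hL u, if_neg (not_lt.2 (mem_Iic.1 hu)), integral_comp_neg_Ioi, neg_neg,
      norm_neg]
  have hKx_neg : Integrable fun x => x • K (-x) := by simpa using hKx.comp_neg.neg
  have hint_right : IntegrableOn (fun u => ‖L u‖ ^ 2) (Ioi 0) :=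
    (integrableOn_norm_sq_upperTail hK hKx).congr_fun hright measurableSet_Ioi
  have hint_left : IntegrableOn (fun u => ‖L u‖ ^ 2) (Iic 0) := by
    have hIci : IntegrableOn (fun u => ‖upperTail (fun x => K (-x)) u‖ ^ 2) (Ici (-0)) := by
      rw [neg_zero, integrableOn_Ici_iff_integrableOn_Ioi]
      exact integrableOn_norm_sq_upperTail hK.comp_neg hKx_neg
    exact hIci.comp_neg_Iic.congr_fun hleft measurableSet_Iic
  rw [← intervalIntegral.integral_Iic_add_Ioi hint_left hint_right, add_comm,
    ← setIntegral_congr_fun measurableSet_Ioi hright,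
    ← setIntegral_congr_fun measurableSet_Iic hleft,
    integral_comp_neg_Iic 0 fun u => ‖upperTail (fun x => K (-x)) u‖ ^ 2, neg_zero]

variable {ι : Type*} {l : Filter ι} [l.IsCountablyGenerated] [CompleteSpace E] {C : NNReal}
  {m τ : ι → ℝ} {N : ι → ℕ}

theorem tendsto_sum_norm_smul_sum_sq_upper (hlip : LipschitzWith C K) (hK : Integrable K)
    (hKx : Integrable fun x => x • K x) (hm : Tendsto m l atTop) (hτ0 : ∀ᶠ n in l, 0 ≤ τ n)
    (hτN : Tendsto (fun n => (N n - τ n) / m n) l atTop)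
    (hN : Tendsto (fun n => (N n : ℝ) / m n ^ 2) l (𝓝 0)) :
    Tendsto (fun n => (m n)⁻¹ * ∑ j ∈ Finset.Icc (⌈τ n⌉₊ + 1) (N n),
        ‖(m n)⁻¹ • ∑ l ∈ Finset.Icc j (N n), K (((l : ℝ) - 1 - τ n) / m n)‖ ^ 2) l
      (𝓝 (∫ u in Ioi 0, ‖upperTail K u‖ ^ 2)) := by
  simp only [sum_Icc_norm_smul_sum_sq_upper]
  refine tendsto_mul_sum_norm_sq_tailRiemannSum hlip hK hKx
    (tendsto_inv_atTop_nhdsGT_zero.comp hm) (tendsto_div_nhdsGE_zero (B := 1) hm ?_)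
    (tendsto_mul_inv_atTop_of_sub_one_le hm hτN ?_)
    (tendsto_natCast_mul_inv_sq_of_le (fun n => Nat.sub_le _ _) hN)
  · filter_upwards [hτ0] with n hn
    constructor <;> linarith [Nat.le_ceil (τ n), Nat.ceil_lt_add_one hn]
  · filter_upwards [hτ0] with n hn
    have : (N n : ℝ) ≤ (N n - ⌈τ n⌉₊ : ℕ) + ⌈τ n⌉₊ := by exact_mod_cast le_tsub_add
    linarith [Nat.ceil_lt_add_one hn]

theorem tendsto_sum_norm_smul_sum_sq_lower (hlip : LipschitzWith C K) (hK : Integrable K)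
    (hKx : Integrable fun x => x • K x) (hm : Tendsto m l atTop) (hτ0 : ∀ᶠ n in l, 0 ≤ τ n)
    (hτN : ∀ n, τ n ≤ N n) (hτ : Tendsto (fun n => τ n / m n) l atTop)
    (hN : Tendsto (fun n => (N n : ℝ) / m n ^ 2) l (𝓝 0)) :
    Tendsto (fun n => (m n)⁻¹ * ∑ j ∈ Finset.Icc 2 ⌈τ n⌉₊,
        ‖(m n)⁻¹ • ∑ l ∈ Finset.Icc 1 (j - 1), K (((l : ℝ) - 1 - τ n) / m n)‖ ^ 2) l
      (𝓝 (∫ u in Ioi 0, ‖upperTail (fun x => K (-x)) u‖ ^ 2)) := by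
  have hlip_neg : LipschitzWith C fun x => K (-x) := by
    simpa [Function.comp_def] using hlip.comp (LipschitzWith.id (α := ℝ)).neg
  have hKx_neg : Integrable fun x => x • K (-x) := by simpa using hKx.comp_neg.neg
  simp only [sum_Icc_norm_smul_sum_sq_lower]
  refine tendsto_mul_sum_norm_sq_tailRiemannSum hlip_neg hK.comp_neg hKx_neg
    (tendsto_inv_atTop_nhdsGT_zero.comp hm) (tendsto_div_nhdsGE_zero (B := 2) hm ?_)
    (tendsto_mul_inv_atTop_of_sub_one_le hm hτ ?_)
    (tendsto_natCast_mul_inv_sq_of_le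
      (fun n => (Nat.sub_le _ _).trans (Nat.ceil_le.2 (hτN n))) hN)
  · filter_upwards [hτ0] with n hn
    constructor <;> linarith [Nat.le_ceil (τ n), Nat.ceil_lt_add_one hn]
  · refine Eventually.of_forall fun n => ?_
    have : (⌈τ n⌉₊ : ℝ) ≤ (⌈τ n⌉₊ - 1 : ℕ) + (1 : ℕ) := by exact_mod_cast le_tsub_add
    push_cast at this
    linarith [Nat.le_ceil (τ n)]

end Kernel

theorem stmt_14_general {E : Type*} [NormedAddCommGroup E] [NormedSpace ℝ E] [CompleteSpace E]
    {T : ℝ} (hT : 0 < T) {K : ℝ → E} {C : NNReal} (hKlip : LipschitzWith C K)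
    (hKint : Integrable K) (hKx : Integrable fun x => x • K x) {L : ℝ → E}
    (hL : ∀ s, L s = if 0 < s then ∫ u in Ioi s, K u else -∫ u in Iic s, K u) {m : ℕ → ℝ}
    (hmΔ : Tendsto (fun n : ℕ => m n * (T / n)) atTop (𝓝 0))
    (hmsq : Tendsto (fun n : ℕ => m n * √(T / n)) atTop atTop) {t : ℝ} (ht : t ∈ Ioo 0 T) :
    Tendsto (fun n : ℕ => (T / n) ^ 2 / m n *
        (∑ j ∈ Finset.Icc (⌈t * n / T⌉₊ + 1) n,
            ‖∑ l ∈ Finset.Icc j n,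
              rescaledKernel K (m n * (T / n)) (((l : ℝ) - 1) * (T / n) - t)‖ ^ 2
          + ∑ j ∈ Finset.Icc 2 ⌈t * n / T⌉₊,
            ‖∑ l ∈ Finset.Icc 1 (j - 1),
              rescaledKernel K (m n * (T / n)) (((l : ℝ) - 1) * (T / n) - t)‖ ^ 2))
      atTop (𝓝 (∫ u, ‖L u‖ ^ 2)) := by
  have hm := tendsto_atTop_of_tendsto_mul_sqrt_div hmsq
  have hn := tendsto_natCast_div_sq_of_tendsto_mul_sqrt_div hT hmsq
  have hτ0 : ∀ n : ℕ, 0 ≤ t * n / T := fun n => by have := ht.1; positivity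
  have hτn : ∀ n : ℕ, t * n / T ≤ n := fun n => by
    rw [div_le_iff₀ hT, mul_comm]
    gcongr
    exact ht.2.le
  have hrest : Tendsto (fun n : ℕ => ((n : ℝ) - t * n / T) / m n) atTop atTop := by
    refine (tendsto_const_mul_natCast_div_div_atTop (sub_pos.2 ht.2) hT hm hmΔ).congr fun n => ?_
    rw [sub_mul, sub_div, mul_div_cancel_left₀ _ hT.ne']
  have upper := tendsto_sum_norm_smul_sum_sq_upper hKlip hKint hKx hm (.of_forall hτ0) hrest hn
  have lower := tendsto_sum_norm_smul_sum_sq_lower hKlip hKint hKx hm (.of_forall hτ0) hτn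
    (tendsto_const_mul_natCast_div_div_atTop ht.1 hT hm hmΔ) hn
  rw [integral_norm_sq_eq_integral_upperTail_add hKint hKx hL]
  refine (upper.add lower).congr' ?_
  filter_upwards [eventually_ne_atTop 0] with n hn0
  have hΔ : T / n ≠ 0 := div_ne_zero hT.ne' (Nat.cast_ne_zero.2 hn0)
  simp only [mul_add, Finset.mul_sum, sq_div_mul_norm_sum_rescaledKernel_sq K hΔ,
    div_div_eq_mul_div]

/-- With `Δ_n = T/n`, `t_j = jΔ_n`, bandwidth `b_n = m_n Δ_n → 0`,
`m_n √Δ_n → ∞`, kernel `K` (bounded, Lipschitz, `∫K = 1`, `∫|K(x)x| < ∞`),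
`L(t) = (∫_t^∞ K) 1_{t>0} − (∫_{−∞}^t K) 1_{t≤0}`, a fixed `t ∈ (0,T)` with
`t ∈ ((i_n−1)Δ_n, i_n Δ_n]` (so `i_n = ⌈tn/T⌉`), and `t/b_n → ∞`, `(T−t)/b_n → ∞`,
the quantity
`(Δ_n²/m_n)[Σ_{j=i+1}^n (Σ_{l=j}^n K_{b_n}(t_{l−1}−t))² + Σ_{j=2}^i (Σ_{l=1}^{j−1} K_{b_n}(t_{l−1}−t))²]`
converges to `∫ L(u)² du`. -/
theorem stmt_14 (T : ℝ) (hT : 0 < T) (K : ℝ → ℝ)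
    (hKbdd : ∃ M : ℝ, ∀ x, |K x| ≤ M)
    (hKlip : ∃ C : NNReal, LipschitzWith C K)
    (hKint : Integrable K) (hK1 : ∫ u, K u = 1)
    (hKx : Integrable (fun x => K x * x))
    (L : ℝ → ℝ)
    (hL : ∀ s, L s = if 0 < s then ∫ u in Ioi s, K u else -∫ u in Iic s, K u)
    (m : ℕ → ℕ) (hm1 : ∀ n, 1 ≤ m n)
    (hmΔ : Tendsto (fun n : ℕ => (m n : ℝ) * (T / (n : ℝ))) atTop (nhds 0))
    (hmsq : Tendsto (fun n : ℕ => (m n : ℝ) * Real.sqrt (T / (n : ℝ))) atTop atTop)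
    (t : ℝ) (ht : t ∈ Ioo 0 T)
    (htb : Tendsto (fun n : ℕ => t / ((m n : ℝ) * (T / (n : ℝ)))) atTop atTop)
    (hTtb : Tendsto (fun n : ℕ => (T - t) / ((m n : ℝ) * (T / (n : ℝ)))) atTop atTop) :
    Tendsto (fun n : ℕ =>
        ((T / (n : ℝ)) ^ 2 / (m n : ℝ)) *
          ((∑ j ∈ Finset.Icc (⌈t * (n : ℝ) / T⌉₊ + 1) n,
              (∑ l ∈ Finset.Icc j n,
                K (((((l : ℝ) - 1) * (T / (n : ℝ))) - t) / ((m n : ℝ) * (T / (n : ℝ))))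
                  / ((m n : ℝ) * (T / (n : ℝ)))) ^ 2)
          + (∑ j ∈ Finset.Icc 2 ⌈t * (n : ℝ) / T⌉₊,
              (∑ l ∈ Finset.Icc 1 (j - 1),
                K (((((l : ℝ) - 1) * (T / (n : ℝ))) - t) / ((m n : ℝ) * (T / (n : ℝ))))
                  / ((m n : ℝ) * (T / (n : ℝ)))) ^ 2)))
      atTop (nhds (∫ u, (L u) ^ 2)) := by
  obtain ⟨C, hlip⟩ := hKlip
  simpa [rescaledKernel, div_eq_inv_mul] using
    stmt_14_general (m := fun n => m n) hT hlip hKint (by simpa [mul_comm] using hKx) hL hmΔ hmsq ht
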